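/- arXiv:1612.00806 — 3 statements merged into one kernel-verified Lean document; each statement's English description precedes it below -/
import Mathlib

section
/- For every positive integer n, define 𝒴_n = −Σ_{k ⊢ n} Υ_0(k) · [ Σ_{2 ≤ r < s ≤ ℓ(k)} k_r k_s + Σ_{r=2}^{ℓ(k)} k_r (k_r − n) ], where the outer sum runs over all compositions k of n. Then 𝒴_n = 1 if n = 2 and 𝒴_n = 0 for all n ≠ 2. -/
open Finset

/-- The multinomial coefficient `M(k) = n!/(k₁!⋯k_l!)` of a composition `k` of `n`,
as a rational number. -/
noncomputable def compM {n : ℕ} (c : Composition n) : ℚ :=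
  (Nat.factorial n : ℚ) / ∏ j : Fin c.length, (Nat.factorial (c.blocksFun j) : ℚ)

/-- `Υ₀(k) = (-1)^{ℓ(k)} M(k)/ℓ(k)`. -/
noncomputable def Upsilon0 {n : ℕ} (c : Composition n) : ℚ :=
  ((-1 : ℚ) ^ c.length / (c.length : ℚ)) * compM c

/-- The `r`-th part (1-based) of a composition, as a rational number
(`0` if out of range; it is only used for `r ≤ ℓ(k)` below). -/
def compPart {n : ℕ} (c : Composition n) (r : ℕ) : ℚ :=
  (c.blocks.getD (r - 1) 0 : ℚ)


/-!
Writing `k₁ = n - ∑_{r ≥ 2} k_r`, the bracket collapses to the symmetric expression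
`½ ∑_r f(k_r)` with `f(k) = k (k - n)`. Since `M(k)` and `ℓ(k)` do not change when the parts are
rotated cyclically, averaging over rotations replaces `ℓ(k)⁻¹ ∑_r f(k_r)` by `f(k₁)`. Summing over
everything after the first part, `∑_{k ⊢ m} (-1)^{ℓ(k)} M(k) = (-1)^m`, so what remains is an
alternating binomial sum, namely `-(Δⁿ f)(0)`. Finally, `f(k) = 2 (k choose 2) + (1 - n) k`, whose
`n`-th difference at `0` is `2` for `n = 2` and `0` for every other `n ≥ 1`.
-/

open fwdDiff

section FiniteDifferences

lemma fwdDiff_iter_addMonoidHom_comp {M G H : Type*} [AddCommMonoid M] [AddCommGroup G]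
    [AddCommGroup H] (φ : G →+ H) (h : M) (f : M → G) (n : ℕ) :
    (Δ_[h])^[n] (φ ∘ f) = φ ∘ (Δ_[h])^[n] f := by
  have semiconj : Function.Semiconj (φ ∘ ·) (Δ_[h] : (M → G) → M → G) Δ_[h] := fun f ↦
    funext fun x ↦ map_sub φ (f (x + h)) (f x)
  exact (semiconj.iterate_right n f).symm

lemma fwdDiff_iter_natCast_choose_zero {R : Type*} [AddCommGroupWithOne R] (m n : ℕ) :
    (Δ_[1])^[n] (fun k : ℕ ↦ (k.choose m : R)) 0 = if n = m then 1 else 0 := by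
  have cast_comp : (fun k : ℕ ↦ (k.choose m : R)) =
      Int.castAddHom R ∘ fun k : ℕ ↦ (k.choose m : ℤ) := by
    ext k
    simp only [Function.comp_apply, Int.coe_castAddHom, Int.cast_natCast]
  rw [cast_comp, fwdDiff_iter_addMonoidHom_comp, Function.comp_apply, fwdDiff_iter_choose_zero]
  split_ifs <;> simp

lemma fwdDiff_iter_mul_sub_self_zero {K : Type*} [Field K] [CharZero K] (n : ℕ) :
    (Δ_[1])^[n] (fun k : ℕ ↦ (k : K) * (k - n)) 0 = if n = 2 then 2 else 0 := by
  have newton_expansion : (fun k : ℕ ↦ (k : K) * (k - n)) =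
      (2 : K) • (fun k : ℕ ↦ (k.choose 2 : K)) + (1 - n : K) • fun k : ℕ ↦ (k.choose 1 : K) := by
    ext k
    simp only [Pi.add_apply, Pi.smul_apply, smul_eq_mul, Nat.cast_choose_two, Nat.choose_one_right]
    ring
  rw [newton_expansion, fwdDiff_iter_add, fwdDiff_iter_const_smul, fwdDiff_iter_const_smul,
    Pi.add_apply, Pi.smul_apply, Pi.smul_apply, fwdDiff_iter_natCast_choose_zero,
    fwdDiff_iter_natCast_choose_zero]
  rcases eq_or_ne n 1 with rfl | hn <;> simp [*]

lemma fwdDiff_iter_succ_zero {R E : Type*} [Ring R] [AddCommGroup E] [Module R E]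
    (f : ℕ → E) (n : ℕ) :
    (Δ_[1])^[n + 1] f 0 =
      ∑ k ∈ range (n + 1), (((n + 1).choose (k + 1) : R) * (-1) ^ (n - k)) • f (k + 1) +
        (-1 : R) ^ (n + 1) • f 0 := by
  have coeff_cast (k : ℕ) : ((-1 : ℤ) ^ (n + 1 - k) * (n + 1).choose k) • f k =
      (((n + 1).choose k : R) * (-1) ^ (n + 1 - k)) • f k := by
    rw [← Int.cast_smul_eq_zsmul R, mul_comm]
    push_cast
    rfl
  simp only [fwdDiff_iter_eq_sum_shift, zero_add, smul_eq_mul, mul_one, coeff_cast]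
  simp only [sum_range_succ' _ (n + 1), Nat.add_sub_add_right, Nat.sub_zero,
    Nat.choose_zero_right, Nat.cast_one, one_mul]

end FiniteDifferences

section PairSums

lemma sq_sum_Icc_eq_sum_sq_add_two_mul_sum {R : Type*} [CommSemiring R] (x : ℕ → R) (a l : ℕ) :
    (∑ r ∈ Icc a l, x r) ^ 2 =
      ∑ r ∈ Icc a l, x r ^ 2 + 2 * ∑ r ∈ Icc a l, ∑ s ∈ Icc (r + 1) l, x r * x s := by
  induction l with
  | zero => rcases a with _ | a <;> simp
  | succ l ih =>
    rcases lt_or_ge (l + 1) a with hla | hal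
    · simp [Icc_eq_empty_of_lt hla]
    · have split_inner : ∑ r ∈ Icc a l, ∑ s ∈ Icc (r + 1) (l + 1), x r * x s =
          ∑ r ∈ Icc a l, ∑ s ∈ Icc (r + 1) l, x r * x s + (∑ r ∈ Icc a l, x r) * x (l + 1) := by
        rw [sum_mul, ← sum_add_distrib]
        refine sum_congr rfl fun r hr ↦ sum_Icc_succ_top ?_ _
        exact Nat.succ_le_succ (mem_Icc.mp hr).2
      simp only [sum_Icc_succ_top hal, split_inner, add_sq, ih,
        Icc_eq_empty_of_lt (lt_add_one (l + 1)), sum_empty]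
      ring

lemma two_mul_sum_mul_add_sum_mul_sub {R : Type*} [CommRing R] (x : ℕ → R) (a l : ℕ) (N : R)
    (hN : ∑ r ∈ Icc a l, x r = N) :
    2 * ((∑ r ∈ Icc (a + 1) l, ∑ s ∈ Icc (r + 1) l, x r * x s) +
        ∑ r ∈ Icc (a + 1) l, x r * (x r - N)) =
      ∑ r ∈ Icc a l, x r * (x r - N) := by
  rcases lt_or_ge l a with hla | hal
  · simp [Icc_eq_empty_of_lt hla, Icc_eq_empty_of_lt (Nat.lt_succ_of_lt hla)]
  · have expand (b : ℕ) : ∑ r ∈ Icc b l, x r * (x r - N) =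
        ∑ r ∈ Icc b l, x r ^ 2 - (∑ r ∈ Icc b l, x r) * N := by
      simp only [mul_sub, ← sq, sum_sub_distrib, sum_mul]
    have peel (f : ℕ → R) : ∑ r ∈ Icc a l, f r = f a + ∑ r ∈ Icc (a + 1) l, f r := by
      rw [Icc_add_one_left_eq_Ioc, add_sum_Ioc_eq_sum_Icc hal]
    rw [mul_add, expand, expand, ← sub_eq_iff_eq_add'.mpr
      (sq_sum_Icc_eq_sum_sq_add_two_mul_sum x (a + 1) l)]
    rw [peel] at hN ⊢
    rw [peel, ← hN]
    ring

end PairSums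

section Compositions

/-- The composition obtained from `c` by moving its first `r` parts to the end; the cyclic action
behind the averaging argument. -/
def rotateComposition {n : ℕ} (r : ℕ) (c : Composition n) : Composition n where
  blocks := c.blocks.rotate r
  blocks_pos hi := c.blocks_pos (List.mem_rotate.mp hi)
  blocks_sum := (List.rotate_perm c.blocks r).sum_eq.trans c.blocks_sum

lemma length_rotateComposition {n : ℕ} (r : ℕ) (c : Composition n) :
    (rotateComposition r c).length = c.length :=
  List.length_rotate ..

lemma rotateComposition_bijective (n r : ℕ) :
    Function.Bijective (rotateComposition r : Composition n → Composition n) :=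
  Finite.injective_iff_bijective.mp fun _ _ h ↦
    Composition.ext (List.rotate_injective r (congrArg Composition.blocks h))

lemma sum_composition_sum_rotate {E : Type*} [AddCommMonoid E] (F : List ℕ → E) (n : ℕ) :
    ∑ c : Composition n, ∑ r ∈ range c.length, F (c.blocks.rotate r) =
      ∑ c : Composition n, c.length • F c.blocks := by
  have mem_swap (c : Composition n) (r : ℕ) : c ∈ (univ : Finset (Composition n)) ∧
      r ∈ range c.length ↔ c ∈ ({c | r < c.length} : Finset (Composition n)) ∧ r ∈ range n := by
    simp only [mem_univ, true_and, mem_range, mem_filter]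
    exact ⟨fun h ↦ ⟨h, h.trans_le c.length_le⟩, And.left⟩
  calc ∑ c : Composition n, ∑ r ∈ range c.length, F (c.blocks.rotate r)
      = ∑ r ∈ range n, ∑ c : Composition n with r < c.length, F (c.blocks.rotate r) :=
        sum_comm' mem_swap
    _ = ∑ r ∈ range n, ∑ c : Composition n with r < c.length, F c.blocks := by
        refine sum_congr rfl fun r _ ↦ sum_bijective _ (rotateComposition_bijective n r)
          (fun c ↦ ?_) fun _ _ ↦ rfl
        simp only [mem_filter_univ, length_rotateComposition]
    _ = ∑ c : Composition n, ∑ _r ∈ range c.length, F c.blocks := (sum_comm' mem_swap).symm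
    _ = ∑ c : Composition n, c.length • F c.blocks := by
        simp only [sum_const, card_range]

lemma sum_composition_succ {E : Type*} [AddCommMonoid E] (F : List ℕ → E) (n : ℕ) :
    ∑ c : Composition (n + 1), F c.blocks =
      ∑ k ∈ range (n + 1), ∑ c : Composition (n - k), F ((k + 1) :: c.blocks) := by
  rw [sum_sigma']
  symm
  refine sum_bij (fun p hp ↦ ((Composition.single (p.1 + 1) p.1.succ_pos).append p.2).cast ?_)
    (fun _ _ ↦ mem_univ _) ?_ ?_ (fun _ _ ↦ rfl)
  · have := mem_range.mp (mem_sigma.mp hp).1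
    lia
  · rintro ⟨k, c⟩ _ ⟨k', c'⟩ _ h
    obtain ⟨rfl, hblocks⟩ : k = k' ∧ c.blocks = c'.blocks := by
      simpa using congrArg Composition.blocks h
    rw [Composition.ext hblocks]
  · rintro ⟨blocks, blocks_pos, blocks_sum⟩ -
    rcases blocks with _ | ⟨j, L⟩
    · simp at blocks_sum
    · obtain ⟨k, rfl⟩ := Nat.exists_eq_add_one.mpr (blocks_pos List.mem_cons_self)
      rw [List.sum_cons] at blocks_sum
      refine ⟨⟨k, L, fun hi ↦ blocks_pos (List.mem_cons_of_mem _ hi), by lia⟩, ?_, rfl⟩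
      simp only [mem_sigma, mem_range, mem_univ, and_true]
      lia

end Compositions

section SignedMultinomial

/-- The signed multinomial coefficient `(-1)^ℓ · (k₁ + ⋯ + k_ℓ)! / (k₁! ⋯ k_ℓ!)` of a list. Indexing
it by lists rather than by compositions avoids casts between the types `Composition n`. -/
def signedMultinomial (L : List ℕ) : ℚ :=
  (-1) ^ L.length * (L.sum.factorial / (L.map fun k ↦ (k.factorial : ℚ)).prod)

lemma signedMultinomial_nil : signedMultinomial [] = 1 := by
  simp [signedMultinomial]

lemma signedMultinomial_cons (k : ℕ) (L : List ℕ) :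
    signedMultinomial (k :: L) = -((k + L.sum).choose k * signedMultinomial L) := by
  have : (L.sum.factorial : ℚ) ≠ 0 := mod_cast L.sum.factorial_ne_zero
  simp only [signedMultinomial, List.length_cons, List.sum_cons, List.map_cons, List.prod_cons,
    Nat.cast_add_choose]
  field_simp
  ring

lemma signedMultinomial_rotate (L : List ℕ) (r : ℕ) :
    signedMultinomial (L.rotate r) = signedMultinomial L := by
  have perm := List.rotate_perm L r
  simp only [signedMultinomial, perm.length_eq, perm.sum_eq, (perm.map _).prod_eq]

lemma Upsilon0_eq_signedMultinomial_div {n : ℕ} (c : Composition n) :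
    Upsilon0 c = signedMultinomial c.blocks / c.length := by
  have prod_factorial : ∏ j : Fin c.length, ((c.blocksFun j).factorial : ℚ) =
      (c.blocks.map fun k ↦ (k.factorial : ℚ)).prod := by
    rw [← c.ofFn_blocksFun, List.map_ofFn, List.prod_ofFn]
    rfl
  rw [Upsilon0, compM, signedMultinomial, prod_factorial, c.blocks_sum, c.blocks_length]
  ring

variable {E : Type*} [AddCommGroup E] [Module ℚ E]

lemma sum_signedMultinomial_smul_headI (f : ℕ → E) (n : ℕ) :
    ∑ c : Composition (n + 1), signedMultinomial c.blocks • f c.blocks.headI =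
      -∑ k ∈ range (n + 1), (((n + 1).choose (k + 1) : ℚ) *
        ∑ c : Composition (n - k), signedMultinomial c.blocks) • f (k + 1) := by
  rw [sum_composition_succ fun L ↦ signedMultinomial L • f L.headI, ← sum_neg_distrib]
  refine sum_congr rfl fun k hk ↦ ?_
  have part_add_rest : k + 1 + (n - k) = n + 1 := by
    have := mem_range.mp hk
    lia
  simp only [signedMultinomial_cons, Composition.blocks_sum, part_add_rest, List.headI_cons,
    ← sum_smul, sum_neg_distrib, ← mul_sum, neg_smul]

lemma sum_signedMultinomial (n : ℕ) :
    ∑ c : Composition n, signedMultinomial c.blocks = (-1) ^ n := by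
  induction n using Nat.strong_induction_on with
  | _ n ih =>
    rcases n with _ | n
    · have blocks_nil (c : Composition 0) : c.blocks = [] := c.blocks_eq_nil.mpr rfl
      simp [blocks_nil, signedMultinomial_nil, composition_card]
    · -- Splitting off the first part leaves all but one term of the `(n + 1)`-st difference of `1`.
      have diff_one : (Δ_[1])^[n + 1] (fun _ : ℕ ↦ (1 : ℚ)) 0 = 0 := by
        simpa using fwdDiff_iter_natCast_choose_zero (R := ℚ) 0 (n + 1)
      rw [fwdDiff_iter_succ_zero (R := ℚ)] at diff_one
      have first_part := sum_signedMultinomial_smul_headI (fun _ ↦ (1 : ℚ)) n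
      simp only [smul_eq_mul, mul_one] at diff_one first_part
      rw [first_part, ← neg_eq_of_add_eq_zero_right diff_one]
      exact congrArg Neg.neg (sum_congr rfl fun k _ ↦ by rw [ih _ (by lia)])

lemma sum_Upsilon0_smul_sum_blocksFun_eq_sum_headI (f : ℕ → E) {n : ℕ} (hn : 0 < n) :
    ∑ c : Composition n, Upsilon0 c • ∑ i, f (c.blocksFun i) =
      ∑ c : Composition n, signedMultinomial c.blocks • f c.blocks.headI := by
  have headI_rotate (c : Composition n) (i : Fin c.length) :
      (c.blocks.rotate i).headI = c.blocksFun i := by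
    rw [List.rotate_eq_drop_append_take i.isLt.le, List.drop_eq_getElem_cons i.isLt]
    rfl
  calc ∑ c : Composition n, Upsilon0 c • ∑ i, f (c.blocksFun i)
      = ∑ c : Composition n, ∑ r ∈ range c.length,
          (signedMultinomial (c.blocks.rotate r) / (c.blocks.rotate r).length) •
            f (c.blocks.rotate r).headI := by
        simp only [sum_range, signedMultinomial_rotate, List.length_rotate, headI_rotate,
          smul_sum, Upsilon0_eq_signedMultinomial_div, Composition.blocks_length]
    _ = ∑ c : Composition n, c.length •
          (signedMultinomial c.blocks / c.blocks.length) • f c.blocks.headI :=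
        sum_composition_sum_rotate
          (fun L ↦ (signedMultinomial L / L.length) • f L.headI) n
    _ = ∑ c : Composition n, signedMultinomial c.blocks • f c.blocks.headI := by
        refine sum_congr rfl fun c _ ↦ ?_
        have length_ne_zero : (c.length : ℚ) ≠ 0 := mod_cast (c.length_pos_of_pos hn).ne'
        rw [← Nat.cast_smul_eq_nsmul ℚ, smul_smul, c.blocks_length,
          mul_div_cancel₀ _ length_ne_zero]

theorem sum_Upsilon0_smul_sum_blocksFun (f : ℕ → E) (hf : f 0 = 0) {n : ℕ} (hn : 0 < n) :
    ∑ c : Composition n, Upsilon0 c • ∑ i, f (c.blocksFun i) = -(Δ_[1])^[n] f 0 := by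
  rw [sum_Upsilon0_smul_sum_blocksFun_eq_sum_headI f hn]
  obtain ⟨n, rfl⟩ := Nat.exists_eq_add_one.mpr hn
  simp only [sum_signedMultinomial_smul_headI, sum_signedMultinomial,
    fwdDiff_iter_succ_zero (R := ℚ), hf, smul_zero, add_zero]

end SignedMultinomial

lemma sum_Icc_compPart {E : Type*} [AddCommMonoid E] {n : ℕ} (c : Composition n) (g : ℚ → E) :
    ∑ r ∈ Icc 1 c.length, g (compPart c r) = ∑ i, g (c.blocksFun i) := by
  have compPart_succ (i : Fin c.length) : compPart c (1 + i) = c.blocksFun i := by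
    rw [compPart, Nat.add_sub_cancel_left, List.getD_eq_getElem _ _ i.isLt]
    rfl
  rw [← Ico_add_one_right_eq_Icc, sum_Ico_eq_sum_range, Nat.add_sub_cancel, sum_range]
  simp only [compPart_succ]

/-- the combinatorial quantity
`𝒴_n = −Σ_{k ⊢ n} Υ₀(k) [ Σ_{2 ≤ r < s ≤ ℓ(k)} k_r k_s + Σ_{r=2}^{ℓ(k)} k_r (k_r − n) ]`
equals `1` if `n = 2` and `0` otherwise. -/
theorem Y_value (n : ℕ) (hn : 1 ≤ n) :
    -∑ c : Composition n, Upsilon0 c *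
        ((∑ r ∈ Icc 2 c.length, ∑ s ∈ Icc (r + 1) c.length,
            compPart c r * compPart c s) +
          ∑ r ∈ Icc 2 c.length, compPart c r * (compPart c r - (n : ℚ)))
      = if n = 2 then 1 else 0 := by
  have sum_parts (c : Composition n) : ∑ r ∈ Icc 1 c.length, compPart c r = n := by
    rw [sum_Icc_compPart c (fun x ↦ x)]
    exact mod_cast c.sum_blocksFun
  have bracket_eq (c : Composition n) :
      (∑ r ∈ Icc 2 c.length, ∑ s ∈ Icc (r + 1) c.length, compPart c r * compPart c s) +
          ∑ r ∈ Icc 2 c.length, compPart c r * (compPart c r - n) =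
        (∑ i, (c.blocksFun i : ℚ) * (c.blocksFun i - n)) / 2 := by
    rw [eq_div_iff two_ne_zero, mul_comm, ← sum_Icc_compPart c fun x ↦ x * (x - n)]
    exact two_mul_sum_mul_add_sum_mul_sub (compPart c) 1 c.length n (sum_parts c)
  have main := sum_Upsilon0_smul_sum_blocksFun (fun k ↦ (k : ℚ) * (k - n)) (by simp) hn
  rw [fwdDiff_iter_mul_sub_self_zero] at main
  simp only [smul_eq_mul] at main
  simp only [bracket_eq, ← mul_div_assoc, ← sum_div, main]
  split_ifs <;> norm_num
end

section
/- Let ℓ ≥ 1, p ∈ [0,1], and let μ be a probability measure on ℕ^ℓ (the law of a random vector (X_1, …, X_ℓ)). Let ν be the probability measure on ℕ^ℓ obtained by composing μ with the product binomial kernel, i.e. ν = μ.bind( x ↦ ⊗_{i=1}^{ℓ} Binomial(x_i, p) ), so that conditionally on (X_1,…,X_ℓ) = x the coordinates Ŷ_1, …, Ŷ_ℓ are independent with Ŷ_i ∼ Binomial(x_i, p). Then for all nonnegative integers k_1, …, k_ℓ with n = k_1 + ⋯ + k_ℓ, E_ν[ Π_{i=1}^{ℓ} binomial(Ŷ_i,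 k_i) ] = p^n · E_μ[ Π_{i=1}^{ℓ} binomial(X_i, k_i) ], as an identity in [0, ∞] (in particular whenever the right-hand side is finite both sides are finite and equal). -/
open MeasureTheory Finset ENNReal

/-- The binomial distribution with parameters `m` and `p`, as a measure on `ℕ`:
mass `choose(m,n) pⁿ (1−p)^{m−n}` at each `n ∈ {0, …, m}`. -/
noncomputable def binMeasure (m : ℕ) (p : ℝ) : Measure ℕ :=
  ∑ n ∈ Finset.range (m + 1),
    ENNReal.ofReal ((m.choose n : ℝ) * p ^ n * (1 - p) ^ (m - n)) • Measure.dirac n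

/-!
Conditionally on `X`, the coordinates are independent, so Tonelli reduces the claim to the binomial
moments of one binomial law. There, `C(m, n) C(n, k) = C(m, k) C(m - k, n - k)` pulls the factor
`C(m, k) pᵏ` out of the sum and leaves the binomial expansion of `(p + (1 - p)) ^ (m - k) = 1`.
-/

theorem sum_range_pow_mul_pow_mul_choose_mul_choose {R : Type*} [CommSemiring R] (x y : R)
    (m k : ℕ) :
    ∑ n ∈ range (m + 1), x ^ n * y ^ (m - n) * m.choose n * n.choose k
      = m.choose k * x ^ k * (x + y) ^ (m - k) := by
  have vanish {n : ℕ} (hn : n < k) : x ^ n * y ^ (m - n) * m.choose n * n.choose k = 0 := by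
    simp [Nat.choose_eq_zero_of_lt hn]
  rcases lt_or_ge m k with hmk | hkm
  · rw [Nat.choose_eq_zero_of_lt hmk, Nat.cast_zero, zero_mul, zero_mul]
    exact sum_eq_zero fun n hn => vanish ((mem_range_succ_iff.mp hn).trans_lt hmk)
  · obtain ⟨j, rfl⟩ := Nat.exists_eq_add_of_le hkm
    rw [add_assoc, sum_range_add, sum_eq_zero fun n hn => vanish (mem_range.mp hn), zero_add,
      Nat.add_sub_cancel_left, add_pow, mul_sum]
    refine sum_congr rfl fun i _ => ?_
    have hchoose : ((k + j).choose (k + i) * (k + i).choose k : R)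
        = (k + j).choose k * j.choose i := by
      have h := Nat.choose_mul (n := k + j) (Nat.le_add_right k i)
      rw [Nat.add_sub_cancel_left, Nat.add_sub_cancel_left] at h
      exact_mod_cast congrArg Nat.cast h
    rw [mul_assoc, hchoose, pow_add, Nat.add_sub_add_left]
    ring

section Tonelli

variable {ι : Type*} {E : ι → Type*} [∀ i, MeasurableSpace (E i)]
  (μ : ∀ i, Measure (E i)) [∀ i, SigmaFinite (μ i)] {f : ∀ i, E i → ℝ≥0∞}

theorem lmarginal_const_mul_prod [DecidableEq ι] (hf : ∀ i, Measurable (f i)) (s : Finset ι)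
    (c : ℝ≥0∞) (x : ∀ i, E i) :
    (∫⋯∫⁻_s, (fun y => c * ∏ i ∈ s, f i (y i)) ∂μ) x = c * ∏ i ∈ s, ∫⁻ t, f i t ∂μ i := by
  induction s using Finset.induction_on generalizing c with
  | empty => simp
  | insert j s hj ih =>
    have hmeas : Measurable fun y : ∀ i, E i => c * ∏ i ∈ insert j s, f i (y i) := by fun_prop
    have inner (y : ∀ i, E i) :
        ∫⁻ t, c * ∏ i ∈ insert j s, f i (Function.update y j t i) ∂μ j
          = (c * ∫⁻ t, f j t ∂μ j) * ∏ i ∈ s, f i (y i) := by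
      have hprod (t : E j) : ∏ i ∈ s, f i (Function.update y j t i) = ∏ i ∈ s, f i (y i) :=
        prod_congr rfl fun i hi => by rw [Function.update_of_ne (ne_of_mem_of_not_mem hi hj)]
      simp only [prod_insert hj, hprod, Function.update_self]
      rw [lintegral_const_mul _ ((hf j).mul_const _), lintegral_mul_const _ (hf j), mul_assoc]
    rw [lmarginal_insert' _ hmeas hj]
    simp only [inner]
    rw [ih, prod_insert hj, mul_assoc]

theorem lintegral_fintype_prod_eq_prod [Fintype ι] (hf : ∀ i, Measurable (f i)) :
    ∫⁻ y, ∏ i, f i (y i) ∂Measure.pi μ = ∏ i, ∫⁻ t, f i t ∂μ i := by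
  classical
  rcases isEmpty_or_nonempty (∀ i, E i) with hE | ⟨⟨x⟩⟩
  · obtain ⟨i, hi⟩ := isEmpty_pi.mp hE
    rw [lintegral_of_isEmpty, prod_eq_zero (mem_univ i) (lintegral_of_isEmpty _ _)]
  · simpa using lmarginal_const_mul_prod μ hf univ 1 x

end Tonelli

instance isFiniteMeasure_binMeasure (m : ℕ) (p : ℝ) : IsFiniteMeasure (binMeasure m p) := by
  have (n : ℕ) : IsFiniteMeasure
      (ENNReal.ofReal ((m.choose n : ℝ) * p ^ n * (1 - p) ^ (m - n)) • Measure.dirac n) :=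
    Measure.smul_finite _ ofReal_ne_top
  unfold binMeasure
  infer_instance

theorem lintegral_binMeasure (m : ℕ) (p : ℝ) (f : ℕ → ℝ≥0∞) :
    ∫⁻ n, f n ∂binMeasure m p
      = ∑ n ∈ range (m + 1), ENNReal.ofReal (m.choose n * p ^ n * (1 - p) ^ (m - n)) * f n := by
  simp only [binMeasure, lintegral_finsetSum_measure, lintegral_smul_measure, lintegral_dirac,
    smul_eq_mul]

theorem lintegral_choose_binMeasure {p : ℝ} (hp0 : 0 ≤ p) (hp1 : p ≤ 1) (m k : ℕ) :
    ∫⁻ n, (n.choose k : ℝ≥0∞) ∂binMeasure m p = ENNReal.ofReal p ^ k * m.choose k := by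
  have hq : 0 ≤ 1 - p := sub_nonneg.mpr hp1
  have hpq : ENNReal.ofReal p + ENNReal.ofReal (1 - p) = 1 := by
    rw [← ofReal_add hp0 hq, add_sub_cancel, ofReal_one]
  have mass (n : ℕ) : ENNReal.ofReal (m.choose n * p ^ n * (1 - p) ^ (m - n))
      = ENNReal.ofReal p ^ n * ENNReal.ofReal (1 - p) ^ (m - n) * m.choose n := by
    rw [ofReal_mul (by positivity), ofReal_mul (by positivity), ofReal_natCast, ofReal_pow hp0,
      ofReal_pow hq]
    ring
  simp only [lintegral_binMeasure, mass]
  rw [sum_range_pow_mul_pow_mul_choose_mul_choose, hpq, one_pow, mul_one, mul_comm]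

theorem lintegral_prod_choose_pi_binMeasure {ι : Type*} [Fintype ι] {p : ι → ℝ}
    (hp0 : ∀ i, 0 ≤ p i) (hp1 : ∀ i, p i ≤ 1) (x k : ι → ℕ) :
    ∫⁻ y, ∏ i, ((y i).choose (k i) : ℝ≥0∞) ∂(Measure.pi fun i => binMeasure (x i) (p i))
      = (∏ i, ENNReal.ofReal (p i) ^ k i) * ∏ i, ((x i).choose (k i) : ℝ≥0∞) := by
  calc
    _ = ∏ i, ∫⁻ n, (n.choose (k i) : ℝ≥0∞) ∂binMeasure (x i) (p i) :=
      lintegral_fintype_prod_eq_prod (fun i => binMeasure (x i) (p i)) fun _ => .of_discrete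
    _ = ∏ i, ENNReal.ofReal (p i) ^ k i * (x i).choose (k i) :=
      prod_congr rfl fun i _ => lintegral_choose_binMeasure (hp0 i) (hp1 i) (x i) (k i)
    _ = _ := prod_mul_distrib

theorem thinning_choose_moment_general {ι : Type*} [Fintype ι] {p : ι → ℝ}
    (hp0 : ∀ i, 0 ≤ p i) (hp1 : ∀ i, p i ≤ 1) (μ : Measure (ι → ℕ)) (k : ι → ℕ) :
    ∫⁻ y, ∏ i, ((y i).choose (k i) : ℝ≥0∞)
        ∂(μ.bind fun x => Measure.pi fun i => binMeasure (x i) (p i))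
      = (∏ i, ENNReal.ofReal (p i) ^ k i) * ∫⁻ x, ∏ i, ((x i).choose (k i) : ℝ≥0∞) ∂μ := by
  rw [Measure.lintegral_bind Measurable.of_discrete.aemeasurable
    Measurable.of_discrete.aemeasurable]
  simp only [lintegral_prod_choose_pi_binMeasure hp0 hp1]
  exact lintegral_const_mul _ .of_discrete

/-- if `ν` is obtained from a probability measure `μ` on `ℕ^ℓ` by composing
with the product binomial kernel (independent thinning of each coordinate with retention
probability `p`), then for all `k₁, …, k_ℓ` with `n = k₁ + ⋯ + k_ℓ`,
`E_ν[Π binom(Ŷᵢ, kᵢ)] = pⁿ E_μ[Π binom(Xᵢ, kᵢ)]` as an identity in `[0,∞]`. -/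
theorem thinning_choose_moment (ℓ : ℕ) (hℓ : 1 ≤ ℓ) (p : ℝ) (hp0 : 0 ≤ p) (hp1 : p ≤ 1)
    (μ : Measure (Fin ℓ → ℕ)) [IsProbabilityMeasure μ]
    (k : Fin ℓ → ℕ) :
    (∫⁻ y : Fin ℓ → ℕ, ∏ i, ((y i).choose (k i) : ℝ≥0∞)
        ∂(μ.bind fun x => Measure.pi fun i => binMeasure (x i) p))
      = ENNReal.ofReal p ^ (∑ i, k i) *
          ∫⁻ x : Fin ℓ → ℕ, ∏ i, ((x i).choose (k i) : ℝ≥0∞) ∂μ := by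
  rw [← prod_pow_eq_pow_sum]
  exact thinning_choose_moment_general (fun _ => hp0) (fun _ => hp1) μ k
end

section
/- Let n ≥ 2, η > 0, let h : ℝ → ℝ be a Schwartz function, and let Υ be any real-valued map on the set of compositions of n. Then, with the convention x_0 = x_n, ∫_{ℝ^n} Υ^n[h](x) · Π_{j=1}^{n} K^sin_η(x_j, x_{j−1}) dx_1⋯dx_n = ∫_{ℝ^{n−1}} Π_{j=1}^{n} ĥ(u_j) · Σ_{k ⊢ n} Υ(k) · max{0, η − Ψ_u(k)/2 − Ψ_{−u}(k)/2} du_1⋯du_{n−1}, where u_n := −(u_1 + ⋯ + u_{n−1}). -/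
open MeasureTheory Finset Complex Real

noncomputable section

/-- The sine kernel with density `η`: `K^sin_η(x,y) = sin(πη(x−y))/(π(x−y))`,
extended by continuity to `η` on the diagonal. -/
def Ksin (η x y : ℝ) : ℝ :=
  if x = y then η else Real.sin (Real.pi * η * (x - y)) / (Real.pi * (x - y))

/-- The Fourier transform `ĥ(u) = ∫ h(x) e^{−2πi x u} dx`. -/
def hat (h : ℝ → ℝ) (u : ℝ) : ℂ :=
  ∫ x : ℝ, (h x : ℂ) * Complex.exp (-(2 * Real.pi * Complex.I * x * u))

/-- Cyclic predecessor on `Fin m` (so `0 ↦ m − 1`), implementing `x₀ = x_m`. -/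
def cpred {m : ℕ} (j : Fin m) : Fin m :=
  ⟨(j + (m - 1)) % m, Nat.mod_lt _ j.pos⟩

/-- `Υ^n[h](x) = Σ_{k ⊢ n} Υ(k) Π_{j=1}^{ℓ(k)} h(x_j)^{k_j}` for `x ∈ ℝⁿ`. -/
def UpsilonFun {n : ℕ} (Υ : Composition n → ℝ) (h : ℝ → ℝ) (x : Fin n → ℝ) : ℝ :=
  ∑ c : Composition n,
    Υ c * ∏ j : Fin c.length, (h (x (Fin.castLE c.length_le j))) ^ (c.blocksFun j)

/-- The vector `(u₁, …, u_{n−1}, u_n) ∈ ℝⁿ` with `u_n := −(u₁ + ⋯ + u_{n−1})`. -/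
def Ufull (n : ℕ) (u : Fin (n - 1) → ℝ) : Fin n → ℝ := fun j =>
  if h : (j : ℕ) < n - 1 then u ⟨j, h⟩ else -(∑ i, u i)

/-- The partial sum `v₁ + ⋯ + v_m` of `v ∈ ℝⁿ`. -/
def psum {n : ℕ} (v : Fin n → ℝ) (m : ℕ) : ℝ :=
  ∑ i : Fin n, if (i : ℕ) < m then v i else 0

/-- `Ψ_v(k) = 2 max_{1 ≤ j < ℓ(k)} max{0, v₁ + ⋯ + v_{k₁+⋯+k_j}}`
(equal to `0` when `ℓ(k) = 1`). -/
def Psi {n : ℕ} (v : Fin n → ℝ) (c : Composition n) : ℝ :=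
  2 * Finset.fold max 0 (fun j => psum v (c.sizeUpTo j)) (Finset.Ico 1 c.length)

/-! Up to the phases coming from the factors `h`, the integral over the cycle is a trace of
projections. Expand all but the last of the `n` factors of `∏ j, h (x j) ^ k j` by Fourier inversion
and exchange the integrals; what remains for fixed frequencies `u` is a cyclic integral of kernels
and phases. The sine kernel of density `η` is the kernel of the projection onto the frequency band
`[-η/2, η/2]`: by Plancherel, kernels of bands `A` and `B` convolve to the kernel of `A ∩ B`, and
moving a phase past a kernel translates its band. Integrating out the vertices of the cycle one by
one therefore leaves the Fourier transform of the remaining factor times the length of an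
intersection of translates of `[-η/2, η/2]` by partial sums of `u`, which is
`max 0 (η - Ψ_u(k)/2 - Ψ_{-u}(k)/2)`.

The sine kernel only decays like `1/|x|`, which is not integrable, but the cycle has one edge more
than there are differences to integrate over: its smallest factor can be traded for a little extra
decay in all the others, and the integral over the cycle converges absolutely.
-/

open scoped FourierTransform ENNReal

section Plancherel

variable {E F : Type*} [NormedAddCommGroup E] [InnerProductSpace ℝ E] [FiniteDimensional ℝ E]
  [MeasurableSpace E] [BorelSpace E] [NormedAddCommGroup F] [InnerProductSpace ℂ F]
  [CompleteSpace F]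

theorem fourier_toLp_ae_eq {f : E → F} (hf : Integrable f) (hf₂ : MemLp f 2) :
    (𝓕 (hf₂.toLp f) : Lp F 2 (volume : Measure E)) =ᵐ[volume] 𝓕 f := by
  have hcont : Continuous (𝓕 f) :=
    VectorFourier.fourierIntegral_continuous Real.continuous_fourierChar continuous_inner hf
  refine ae_eq_of_integral_contDiff_smul_eq
    ((Lp.memLp (𝓕 (hf₂.toLp f))).locallyIntegrable one_le_two)
    hcont.locallyIntegrable fun g g_smooth g_cpt ↦ ?_
  have hφ_cpt : HasCompactSupport (Complex.ofRealCLM ∘ g) := g_cpt.comp_left rfl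
  let φ : SchwartzMap E ℂ := hφ_cpt.toSchwartzMap (by fun_prop)
  calc ∫ x, g x • (𝓕 (hf₂.toLp f) : Lp F 2 (volume : Measure E)) x
      = Lp.toTemperedDistribution (𝓕 (hf₂.toLp f)) φ := by
        simp [Lp.toTemperedDistribution_apply, φ]
    _ = ∫ x, 𝓕 φ x • hf₂.toLp f x := by
        rw [← Lp.fourier_toTemperedDistribution_eq, TemperedDistribution.fourier_apply,
          Lp.toTemperedDistribution_apply]
    _ = ∫ x, 𝓕 (φ : E → ℂ) x • f x := by
        refine integral_congr_ae ?_
        filter_upwards [hf₂.coeFn_toLp] with x hx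
        rw [hx, SchwartzMap.fourier_coe]
    _ = ∫ x, φ x • 𝓕 f x := by
        simpa using! VectorFourier.integral_fourierIntegral_smul_eq_flip (L := innerₗ E)
          Real.continuous_fourierChar continuous_inner φ.integrable hf
    _ = ∫ x, g x • 𝓕 f x := by simp [φ]

theorem integral_inner_fourier_eq {f g : E → F} (hf : Integrable f) (hf₂ : MemLp f 2)
    (hg : Integrable g) (hg₂ : MemLp g 2) :
    ∫ ξ, inner ℂ (𝓕 f ξ) (𝓕 g ξ) = ∫ x, inner ℂ (f x) (g x) := by
  calc ∫ ξ, inner ℂ (𝓕 f ξ) (𝓕 g ξ)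
      = inner ℂ (𝓕 (hf₂.toLp f)) (𝓕 (hg₂.toLp g)) := by
        refine integral_congr_ae ?_
        filter_upwards [fourier_toLp_ae_eq hf hf₂, fourier_toLp_ae_eq hg hg₂] with ξ hfξ hgξ
        rw [hfξ, hgξ]
    _ = inner ℂ (hf₂.toLp f) (hg₂.toLp g) := Lp.inner_fourier_eq _ _
    _ = ∫ x, inner ℂ (f x) (g x) := by
        refine integral_congr_ae ?_
        filter_upwards [hf₂.coeFn_toLp, hg₂.coeFn_toLp] with x hfx hgx
        rw [hfx, hgx]

end Plancherel

section BandKernel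

/-- The convolution kernel of the projection onto frequencies in `A`: the inverse Fourier transform
of the indicator function of `A`. The sine kernel of density `η` is the case `A = [-η/2, η/2]`. -/
def bandKernel (A : Set ℝ) (x : ℝ) : ℂ :=
  ∫ t in A, (𝐞 (t * x) : ℂ)

variable {A B : Set ℝ}

theorem continuous_fourierChar_coe : Continuous fun t : ℝ ↦ (𝐞 t : ℂ) :=
  continuous_subtype_val.comp Real.continuous_fourierChar

theorem fourierChar_coe_add (s t : ℝ) : (𝐞 (s + t) : ℂ) = 𝐞 s * 𝐞 t := by
  rw [AddChar.map_add_eq_mul, Circle.coe_mul]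

theorem fourierChar_coe_sum {ι : Type*} (s : Finset ι) (f : ι → ℝ) :
    (𝐞 (∑ i ∈ s, f i) : ℂ) = ∏ i ∈ s, (𝐞 (f i) : ℂ) := by
  induction s using Finset.cons_induction with
  | empty => simp
  | cons i s hi ih => rw [sum_cons, prod_cons, fourierChar_coe_add, ih]

theorem norm_bandKernel_le (hA : volume A ≠ ∞) (x : ℝ) :
    ‖bandKernel A x‖ ≤ volume.real A := by
  simpa [bandKernel] using norm_setIntegral_le_of_norm_le_const (C := 1) hA.lt_top
    fun t _ ↦ (Circle.norm_coe (𝐞 (t * x))).le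

theorem integrableOn_fourierChar_mul (hA : volume A ≠ ∞) (x : ℝ) :
    IntegrableOn (fun t ↦ (𝐞 (t * x) : ℂ)) A :=
  .of_bound hA.lt_top
    (continuous_fourierChar_coe.comp (continuous_mul_const x)).aestronglyMeasurable 1
    (.of_forall fun _ ↦ (Circle.norm_coe _).le)

theorem continuous_bandKernel (hA : volume A ≠ ∞) : Continuous (bandKernel A) := by
  have : IsFiniteMeasure (volume.restrict A) := by simpa [isFiniteMeasure_restrict] using hA
  refine continuous_of_dominated (bound := fun _ ↦ 1)
    (fun x ↦ (integrableOn_fourierChar_mul hA x).aestronglyMeasurable)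
    (fun _ ↦ .of_forall fun _ ↦ (Circle.norm_coe _).le) (integrable_const _)
    (.of_forall fun t ↦ continuous_fourierChar_coe.comp (continuous_const_mul t))

theorem bandKernel_zero : bandKernel A 0 = volume.real A := by
  simp [bandKernel, Measure.real]

theorem conj_bandKernel (x : ℝ) : starRingEnd ℂ (bandKernel A x) = bandKernel A (-x) := by
  simp only [bandKernel, ← integral_conj, mul_neg, AddChar.map_neg_eq_inv, Circle.coe_inv_eq_conj]

theorem bandKernel_preimage_add_right (s x : ℝ) :
    bandKernel ((· + s) ⁻¹' B) x = 𝐞 (-(s * x)) * bandKernel B x := by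
  calc bandKernel ((· + s) ⁻¹' B) x
      = ∫ t in (· + s) ⁻¹' B, (𝐞 (-(s * x)) : ℂ) * 𝐞 ((t + s) * x) := by
        simp only [bandKernel, ← fourierChar_coe_add]
        congr with t
        ring_nf
    _ = ∫ t in B, (𝐞 (-(s * x)) : ℂ) * 𝐞 (t * x) :=
        (measurePreserving_add_right volume s).setIntegral_preimage_emb
          (measurableEmbedding_addRight s) (fun t ↦ (𝐞 (-(s * x)) : ℂ) * 𝐞 (t * x)) B
    _ = 𝐞 (-(s * x)) * bandKernel B x := integral_const_mul _ _

theorem fourier_indicator_fourierChar (hA : MeasurableSet A) (x z : ℝ) :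
    𝓕 (A.indicator fun t ↦ (𝐞 (t * x) : ℂ)) z = bandKernel A (x - z) := by
  rw [Real.fourier_real_eq, bandKernel, ← integral_indicator hA]
  congr with t
  by_cases ht : t ∈ A
  · simp only [Set.indicator_of_mem ht, Circle.smul_def, smul_eq_mul]
    rw [← fourierChar_coe_add]
    ring_nf
  · simp [ht]

theorem integral_bandKernel_mul_bandKernel (hA : MeasurableSet A) (hA' : volume A ≠ ∞)
    (hB : MeasurableSet B) (hB' : volume B ≠ ∞) (x y : ℝ) :
    ∫ z, bandKernel A (z - x) * bandKernel B (y - z) = bandKernel (A ∩ B) (y - x) := by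
  have hmem {S : Set ℝ} (hS : MeasurableSet S) (hS' : volume S ≠ ∞) (w : ℝ) :
      Integrable (S.indicator fun t ↦ (𝐞 (t * w) : ℂ)) ∧
        MemLp (S.indicator fun t ↦ (𝐞 (t * w) : ℂ)) 2 := by
    have : IsFiniteMeasure (volume.restrict S) := by simpa [isFiniteMeasure_restrict] using hS'
    have hint := integrableOn_fourierChar_mul hS' w
    exact ⟨hint.integrable_indicator hS, (memLp_indicator_iff_restrict hS).2 <|
      .of_bound hint.aestronglyMeasurable 1 (.of_forall fun _ ↦ (Circle.norm_coe _).le)⟩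
  calc ∫ z, bandKernel A (z - x) * bandKernel B (y - z)
      = ∫ z, inner ℂ (𝓕 (A.indicator fun t ↦ (𝐞 (t * x) : ℂ)) z)
          (𝓕 (B.indicator fun t ↦ (𝐞 (t * y) : ℂ)) z) := by
        simp only [fourier_indicator_fourierChar hA, fourier_indicator_fourierChar hB,
          RCLike.inner_apply, conj_bandKernel, neg_sub, mul_comm (bandKernel A _)]
    _ = ∫ t, (A ∩ B).indicator (fun t ↦ (𝐞 (t * (y - x)) : ℂ)) t := by
        rw [integral_inner_fourier_eq (hmem hA hA' x).1 (hmem hA hA' x).2 (hmem hB hB' y).1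
          (hmem hB hB' y).2]
        congr with t
        have hmul : (𝐞 (t * (y - x)) : ℂ) = 𝐞 (t * y) * starRingEnd ℂ (𝐞 (t * x)) := by
          rw [mul_sub, sub_eq_add_neg, fourierChar_coe_add, AddChar.map_neg_eq_inv,
            Circle.coe_inv_eq_conj]
        by_cases htA : t ∈ A <;> by_cases htB : t ∈ B <;> simp [htA, htB, hmul]
    _ = bandKernel (A ∩ B) (y - x) := integral_indicator (hA.inter hB)

theorem integral_fourierChar_mul_bandKernel_mul_bandKernel (hA : MeasurableSet A)
    (hA' : volume A ≠ ∞) (hB : MeasurableSet B) (hB' : volume B ≠ ∞) (s x y : ℝ) :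
    ∫ z, (𝐞 (s * z) * bandKernel A (z - x)) * bandKernel B (y - z) =
      𝐞 (s * y) * bandKernel (A ∩ (· + s) ⁻¹' B) (y - x) := by
  have hshift : MeasurePreserving (· + s) (volume : Measure ℝ) volume :=
    measurePreserving_add_right volume s
  rw [← integral_bandKernel_mul_bandKernel hA hA' (hB.preimage (measurable_add_const s))
    (by rwa [hshift.measure_preimage hB.nullMeasurableSet]), ← integral_const_mul]
  congr with z
  have hphase : (𝐞 (s * z) : ℂ) = 𝐞 (s * y) * 𝐞 (-(s * (y - z))) := by
    rw [← fourierChar_coe_add]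
    ring_nf
  rw [bandKernel_preimage_add_right, hphase]
  ring

variable {η : ℝ}

theorem bandKernel_Icc_sub (hη : 0 ≤ η) (x y : ℝ) :
    bandKernel (Set.Icc (-(η / 2)) (η / 2)) (x - y) = Ksin η x y := by
  have hexp : bandKernel (Set.Icc (-(η / 2)) (η / 2)) (x - y) =
      ∫ t in (-(η / 2))..(η / 2), cexp (2 * π * I * (x - y) * t) := by
    rw [intervalIntegral.integral_of_le (by linarith), ← integral_Icc_eq_integral_Ioc]
    refine integral_congr_ae (.of_forall fun t ↦ ?_)
    simp only [Real.fourierChar_apply]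
    push_cast
    ring_nf
  rw [hexp, Ksin]
  split_ifs with hxy
  · simp [hxy]
  · have hxy' : (x : ℂ) - y ≠ 0 := by exact_mod_cast sub_ne_zero.2 hxy
    have hpi : (π : ℂ) ≠ 0 := by exact_mod_cast Real.pi_ne_zero
    rw [integral_exp_mul_complex (by simp [hxy', hpi])]
    push_cast [Complex.sin]
    rw [show 2 * (π : ℂ) * I * (x - y) * (η / 2) = π * η * (x - y) * I by ring,
      show 2 * (π : ℂ) * I * (x - y) * -(η / 2) = -(π * η * (x - y)) * I by ring]
    field_simp
    rw [I_sq]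
    ring

theorem abs_Ksin_mul_abs_sub_le_one (x y : ℝ) : |Ksin η x y| * |x - y| ≤ 1 := by
  rw [Ksin]
  split_ifs with hxy
  · simp [hxy]
  · have hpos : 0 < |x - y| := abs_pos.2 (sub_ne_zero.2 hxy)
    rw [abs_div, abs_mul π, abs_of_pos Real.pi_pos, ← div_div, div_mul_cancel₀ _ hpos.ne']
    exact (div_le_one Real.pi_pos).2 ((abs_sin_le_one _).trans (by linarith [Real.pi_gt_three]))

theorem norm_bandKernel_Icc_le (hη : 0 ≤ η) (x : ℝ) :
    ‖bandKernel (Set.Icc (-(η / 2)) (η / 2)) x‖ ≤ (η + 1) * (1 + ‖x‖)⁻¹ := by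
  have hbdd : ‖bandKernel (Set.Icc (-(η / 2)) (η / 2)) x‖ ≤ η := by
    simpa [hη] using norm_bandKernel_le (A := Set.Icc (-(η / 2)) (η / 2)) (by simp) x
  have hdecay : ‖bandKernel (Set.Icc (-(η / 2)) (η / 2)) x‖ * ‖x‖ ≤ 1 := by
    have := bandKernel_Icc_sub hη x 0
    rw [sub_zero] at this
    simpa [this] using abs_Ksin_mul_abs_sub_le_one (η := η) x 0
  rw [← div_eq_mul_inv, le_div_iff₀ (by positivity)]
  linarith

end BandKernel

section CyclicIntegrability

theorem prod_le_sum_prod_erase_rpow {ι : Type*} [Fintype ι] [DecidableEq ι] [Nonempty ι]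
    {b : ι → ℝ} (hb : ∀ i, 0 < b i) (hb' : ∀ i, b i ≤ 1) :
    ∏ i, b i ≤ ∑ j, ∏ i ∈ univ.erase j, b i ^ (1 + (Fintype.card ι : ℝ)⁻¹) := by
  obtain ⟨j, hj⟩ := Finite.exists_min b
  have hmin : b j ≤ ∏ i ∈ univ.erase j, b i ^ (Fintype.card ι : ℝ)⁻¹ := by
    calc b j = ∏ _i : ι, b j ^ (Fintype.card ι : ℝ)⁻¹ := by
          rw [prod_const, card_univ, Real.rpow_inv_natCast_pow (hb j).le Fintype.card_ne_zero]
      _ ≤ ∏ i, b i ^ (Fintype.card ι : ℝ)⁻¹ :=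
          prod_le_prod (fun _ _ ↦ (Real.rpow_pos_of_pos (hb j) _).le)
            fun i _ ↦ Real.rpow_le_rpow (hb j).le (hj i) (by positivity)
      _ ≤ ∏ i ∈ univ.erase j, b i ^ (Fintype.card ι : ℝ)⁻¹ :=
          prod_le_prod_of_subset_of_le_one (erase_subset _ _)
            (fun i _ ↦ (Real.rpow_pos_of_pos (hb i) _).le)
            fun i _ _ ↦ Real.rpow_le_one (hb i).le (hb' i) (by positivity)
  calc ∏ i, b i = (∏ i ∈ univ.erase j, b i) * b j := (prod_erase_mul _ _ (mem_univ j)).symm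
    _ ≤ (∏ i ∈ univ.erase j, b i) * ∏ i ∈ univ.erase j, b i ^ (Fintype.card ι : ℝ)⁻¹ :=
        mul_le_mul_of_nonneg_left hmin (prod_nonneg fun i _ ↦ (hb i).le)
    _ = ∏ i ∈ univ.erase j, b i ^ (1 + (Fintype.card ι : ℝ)⁻¹) := by
        rw [← prod_mul_distrib]
        exact prod_congr rfl fun i _ ↦ by rw [Real.rpow_one_add' (hb i).le (by positivity)]
    _ ≤ ∑ j, ∏ i ∈ univ.erase j, b i ^ (1 + (Fintype.card ι : ℝ)⁻¹) :=
        single_le_sum (f := fun j ↦ ∏ i ∈ univ.erase j, b i ^ (1 + (Fintype.card ι : ℝ)⁻¹))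
          (fun j _ ↦ prod_nonneg fun i _ ↦ (Real.rpow_pos_of_pos (hb i) _).le) (mem_univ j)

variable {m : ℕ}

theorem cpred_eq_sub_one (j : Fin (m + 1)) : cpred j = j - 1 := by
  ext
  rcases m with - | m
  · simp [cpred]
  · have hone : 1 % (m + 1 + 1) = 1 := Nat.mod_eq_of_lt (by omega)
    simp only [cpred, Fin.sub_def, Fin.val_one', hone]
    congr 1
    omega

theorem cpred_zero : cpred (0 : Fin (m + 1)) = Fin.last m := by
  ext
  simp [cpred]

theorem cpred_succ (i : Fin m) : cpred i.succ = i.castSucc := by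
  ext
  simp only [cpred, Fin.val_succ, Fin.val_castSucc, Nat.add_sub_cancel]
  rw [show (i : ℕ) + 1 + m = i + (m + 1) by omega, Nat.add_mod_right,
    Nat.mod_eq_of_lt (by omega)]

theorem integrable_comp_linearMap {E F : Type*} [NormedAddCommGroup E] [NormedSpace ℝ E]
    [FiniteDimensional ℝ E] [MeasurableSpace E] [BorelSpace E] {μ : Measure E} [μ.IsAddHaarMeasure]
    [NormedAddCommGroup F] {g : E → F} (hg : Integrable g μ) {T : E →ₗ[ℝ] E} (hT : T.ker = ⊥) :
    Integrable (g ∘ T) μ := by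
  have hdet : T.det ≠ 0 := fun h ↦ (LinearMap.bot_lt_ker_of_det_eq_zero h).ne' hT
  have hmap : Integrable g (μ.map T) := by
    rw [Measure.map_linearMap_addHaar_eq_smul_addHaar μ hdet]
    exact hg.smul_measure ENNReal.ofReal_ne_top
  exact hmap.comp_measurable T.continuous_of_finiteDimensional.measurable

/-- The cyclic difference coordinates `x i - x (i - 1)` on `ℝ^(m+1)`, with the redundant `j`-th one
replaced by `x 0`. -/
def cyclicDiff (j : Fin (m + 1)) : (Fin (m + 1) → ℝ) →ₗ[ℝ] (Fin (m + 1) → ℝ) :=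
  LinearMap.pi fun i ↦ if i = j then LinearMap.proj (R := ℝ) (φ := fun _ ↦ ℝ) 0
    else LinearMap.proj (R := ℝ) (φ := fun _ ↦ ℝ) i - LinearMap.proj (cpred i)

theorem cyclicDiff_apply_self (j : Fin (m + 1)) (x : Fin (m + 1) → ℝ) :
    cyclicDiff j x j = x 0 := by
  simp [cyclicDiff]

theorem cyclicDiff_apply_of_ne {i j : Fin (m + 1)} (hij : i ≠ j) (x : Fin (m + 1) → ℝ) :
    cyclicDiff j x i = x i - x (cpred i) := by
  simp [cyclicDiff, hij]

theorem ker_cyclicDiff (j : Fin (m + 1)) : (cyclicDiff j).ker = ⊥ := by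
  refine LinearMap.ker_eq_bot'.2 fun x hx ↦ ?_
  have hzero : x 0 = 0 := by rw [← cyclicDiff_apply_self j x, hx, Pi.zero_apply]
  have hne (i : Fin (m + 1)) (hi : i ≠ j) : x i - x (cpred i) = 0 := by
    rw [← cyclicDiff_apply_of_ne hi, hx, Pi.zero_apply]
  have hsum : ∑ i, (x i - x (cpred i)) = 0 := by
    rw [sum_sub_distrib, sub_eq_zero, Fin.sum_univ_succ (fun i ↦ x (cpred i)), cpred_zero,
      Fin.sum_univ_castSucc, add_comm]
    simp only [cpred_succ]
  have hdiff (i : Fin (m + 1)) : x i = x (cpred i) := by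
    rcases eq_or_ne i j with rfl | hi
    · rwa [Fintype.sum_eq_single i hne, sub_eq_zero] at hsum
    · exact sub_eq_zero.1 (hne i hi)
  funext i
  induction i using Fin.induction with
  | zero => exact hzero
  | succ i ih => rw [hdiff, cpred_succ, ih, Pi.zero_apply, Pi.zero_apply]

theorem integrable_mul_prod_erase_cyclic {f : ℝ → ℝ} (hf : Integrable f) {r : ℝ} (hr : 1 < r)
    (j : Fin (m + 1)) :
    Integrable fun x : Fin (m + 1) → ℝ ↦
      f (x 0) * ∏ i ∈ univ.erase j, (1 + ‖x i - x (cpred i)‖)⁻¹ ^ r := by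
  have hprod : Integrable fun y : Fin (m + 1) → ℝ ↦
      ∏ i, if i = j then f (y i) else (1 + ‖y i‖) ^ (-r) := by
    refine Integrable.fintype_prod (f := fun i y ↦ if i = j then f y else (1 + ‖y‖) ^ (-r))
      fun i ↦ ?_
    split_ifs
    · exact hf
    · exact integrable_one_add_norm (by simpa using hr)
  convert integrable_comp_linearMap hprod (ker_cyclicDiff j) using 1
  funext x
  simp only [Function.comp_apply]
  rw [← mul_prod_erase _ _ (mem_univ j), if_pos rfl, cyclicDiff_apply_self]
  congr 1
  refine prod_congr rfl fun i hi ↦ ?_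
  rw [if_neg (ne_of_mem_erase hi), cyclicDiff_apply_of_ne (ne_of_mem_erase hi),
    Real.inv_rpow (by positivity), Real.rpow_neg (by positivity)]

theorem integrable_mul_prod_cyclic_zero {f k : ℝ → ℂ} {C : ℝ} (hf : Integrable f)
    (hk : Continuous k) (hkC : ∀ x, ‖k x‖ ≤ C * (1 + ‖x‖)⁻¹) :
    Integrable fun x : Fin (m + 1) → ℝ ↦ f (x 0) * ∏ j, k (x j - x (cpred j)) := by
  have hprod : Continuous fun x : Fin (m + 1) → ℝ ↦ ∏ j, k (x j - x (cpred j)) :=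
    continuous_finsetProd _ fun j _ ↦
      hk.comp ((continuous_apply j).sub (continuous_apply (cpred j)))
  have hmeas := (hf.aestronglyMeasurable.comp_quasiMeasurePreserving
    (Measure.quasiMeasurePreserving_eval (fun _ : Fin (m + 1) ↦ volume) 0)).mul
    hprod.aestronglyMeasurable
  have hr : 1 < 1 + (Fintype.card (Fin (m + 1)) : ℝ)⁻¹ :=
    lt_add_of_pos_right _ (inv_pos.2 (Nat.cast_pos.2 Fintype.card_pos))
  have hC : 0 ≤ C := by simpa using (norm_nonneg _).trans (hkC 0)
  refine ((integrable_finsetSum univ fun j _ ↦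
    integrable_mul_prod_erase_cyclic hf.norm hr j).const_mul (C ^ (m + 1))).mono' hmeas
      (.of_forall fun x ↦ ?_)
  calc ‖f (x 0) * ∏ j, k (x j - x (cpred j))‖
      ≤ ‖f (x 0)‖ * ∏ j, (C * (1 + ‖x j - x (cpred j)‖)⁻¹) := by
        rw [norm_mul, norm_prod]
        gcongr
        exact hkC _
    _ = C ^ (m + 1) * (‖f (x 0)‖ * ∏ j, (1 + ‖x j - x (cpred j)‖)⁻¹) := by
        rw [prod_mul_distrib, prod_const, card_univ, Fintype.card_fin]
        ring
    _ ≤ _ := by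
        rw [← mul_sum]
        gcongr
        exact prod_le_sum_prod_erase_rpow (fun j ↦ by positivity)
          fun j ↦ inv_le_one_of_one_le₀ (by simp)

/-- The rotation of coordinates `x j ↦ x (j + p)`, which moves the `p`-th vertex of a cycle to the
base point `0`. -/
def cyclicShift (p : Fin (m + 1)) : (Fin (m + 1) → ℝ) ≃ᵐ (Fin (m + 1) → ℝ) :=
  MeasurableEquiv.piCongrLeft (fun _ ↦ ℝ) (Equiv.subRight p)

theorem cyclicShift_apply (p : Fin (m + 1)) (x : Fin (m + 1) → ℝ) (j : Fin (m + 1)) :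
    cyclicShift p x j = x (j + p) := by
  conv_lhs => rw [← add_sub_cancel_right j p]
  exact MeasurableEquiv.piCongrLeft_apply_apply (β := fun _ ↦ ℝ) (Equiv.subRight p) x (j + p)

theorem measurePreserving_cyclicShift (p : Fin (m + 1)) : MeasurePreserving (cyclicShift p) :=
  volume_measurePreserving_piCongrLeft (fun _ ↦ ℝ) (Equiv.subRight p)

theorem prod_cyclicShift (k : ℝ → ℂ) (p : Fin (m + 1)) (x : Fin (m + 1) → ℝ) :
    ∏ j, k (cyclicShift p x j - cyclicShift p x (cpred j)) = ∏ j, k (x j - x (cpred j)) := by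
  rw [← Equiv.prod_comp (Equiv.addRight p) fun j ↦ k (x j - x (cpred j))]
  refine prod_congr rfl fun j _ ↦ ?_
  simp only [cyclicShift_apply, Equiv.coe_addRight, cpred_eq_sub_one, sub_add_eq_add_sub]

theorem integrable_mul_prod_cyclic {f k : ℝ → ℂ} {C : ℝ} (hf : Integrable f)
    (hk : Continuous k) (hkC : ∀ x, ‖k x‖ ≤ C * (1 + ‖x‖)⁻¹) (p : Fin (m + 1)) :
    Integrable fun x : Fin (m + 1) → ℝ ↦ f (x p) * ∏ j, k (x j - x (cpred j)) := by
  refine ((measurePreserving_cyclicShift p).integrable_comp_of_integrable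
    (integrable_mul_prod_cyclic_zero hf hk hkC)).congr (.of_forall fun x ↦ ?_)
  rw [Function.comp_apply, prod_cyclicShift, cyclicShift_apply, zero_add]

end CyclicIntegrability

section CycleIntegral

section Snoc

variable {α E : Type*} [MeasureSpace α] [SigmaFinite (volume : Measure α)] [NormedAddCommGroup E]
  {m : ℕ} {F : (Fin (m + 1) → α) → E}

theorem measurePreserving_snoc :
    MeasurePreserving fun p : α × (Fin m → α) ↦ (Fin.snoc p.2 p.1 : Fin (m + 1) → α) := by
  convert! (volume_preserving_piFinSuccAbove (fun _ : Fin (m + 1) ↦ α) (Fin.last m)).symm using 1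
  ext p i
  simp [MeasurableEquiv.piFinSuccAbove]

theorem integrable_comp_snoc (hF : Integrable F) :
    Integrable (fun p : α × (Fin m → α) ↦ F (Fin.snoc p.2 p.1)) (volume.prod volume) :=
  measurePreserving_snoc.integrable_comp_of_integrable hF

variable [NormedSpace ℝ E]

theorem integral_eq_integral_integral_snoc (hF : Integrable F) :
    ∫ x, F x = ∫ x : Fin m → α, ∫ z, F (Fin.snoc x z) := by
  rw [← integral_prod_symm _ (integrable_comp_snoc hF)]
  refine ((volume_preserving_piFinSuccAbove (fun _ ↦ α) (Fin.last m)).symm.integral_comp'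
    F).symm.trans ?_
  simp only [MeasurableEquiv.piFinSuccAbove, Fin.insertNthEquiv_last]
  rfl

end Snoc

variable {m : ℕ}

theorem psum_init (s : Fin (m + 1) → ℝ) {j : ℕ} (hj : j ≤ m) :
    psum (Fin.init s) j = psum s j := by
  simp only [psum, Fin.sum_univ_castSucc (n := m), Fin.val_castSucc, Fin.val_last, hj.not_gt,
    if_false, add_zero, Fin.init]

theorem psum_eq_sum (s : Fin m → ℝ) : psum s m = ∑ i, s i := by
  simp [psum]

/-- The integrand of the cyclic chain of band kernels through `x 0, …, x m`: the edges of the path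
carry the band `A`, the closing edge carries the band `B`, the vertex `x 0` the weight `f`, and
every other vertex `x (j + 1)` the phase of frequency `s j`. -/
def bandCycle (f : ℝ → ℂ) (s : Fin m → ℝ) (A B : Set ℝ) (x : Fin (m + 1) → ℝ) : ℂ :=
  f (x 0) * (∏ j : Fin m, 𝐞 (s j * x j.succ) * bandKernel A (x j.succ - x j.castSucc)) *
    bandKernel B (x 0 - x (Fin.last m))

variable {A B : Set ℝ}

theorem fourier_mul_fourierChar (f : ℝ → ℂ) (c w : ℝ) :
    𝓕 (fun t ↦ f t * 𝐞 (c * t)) w = 𝓕 f (w - c) := by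
  simp only [Real.fourier_real_eq, Circle.smul_def, smul_eq_mul]
  congr with t
  rw [mul_left_comm, mul_comm _ (f t), ← fourierChar_coe_add]
  ring_nf

theorem integral_bandCycle_snoc (f : ℝ → ℂ) (s : Fin (m + 1) → ℝ) (hA : MeasurableSet A)
    (hA' : volume A ≠ ∞) (hB : MeasurableSet B) (hB' : volume B ≠ ∞) (x : Fin (m + 1) → ℝ) :
    ∫ z, bandCycle f s A B (Fin.snoc x z) =
      bandCycle (fun t ↦ f t * 𝐞 (s (Fin.last m) * t)) (Fin.init s) A
        (A ∩ (· + s (Fin.last m)) ⁻¹' B) x := by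
  have hzero (z : ℝ) : (Fin.snoc x z : Fin (m + 2) → ℝ) 0 = x 0 := by
    rw [← Fin.castSucc_zero, Fin.snoc_castSucc]
  simp only [bandCycle, hzero, Fin.prod_univ_castSucc (n := m), Fin.succ_last, Fin.snoc_last,
    Fin.snoc_castSucc, Fin.succ_castSucc, Fin.init]
  set P := ∏ j : Fin m,
    (𝐞 (s j.castSucc * x j.succ) : ℂ) * bandKernel A (x j.succ - x j.castSucc)
  calc _ = ∫ z, f (x 0) * P * (𝐞 (s (Fin.last m) * z) * bandKernel A (z - x (Fin.last m)) *
        bandKernel B (x 0 - z)) := by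
        congr with z
        ring
    _ = _ := by
        rw [integral_const_mul, integral_fourierChar_mul_bandKernel_mul_bandKernel hA hA' hB hB']
        ring

theorem integral_bandCycle {f : ℝ → ℂ} {s : Fin m → ℝ} (hA : MeasurableSet A)
    (hA' : volume A ≠ ∞) (hB : MeasurableSet B) (hB' : volume B ≠ ∞)
    (hint : Integrable (bandCycle f s A B)) :
    ∫ x, bandCycle f s A B x = 𝓕 f (-∑ j, s j) *
      volume.real {t | (∀ j < m, t + psum s j ∈ A) ∧ t + psum s m ∈ B} := by
  induction m generalizing f B with
  | zero =>
    refine ((volume_preserving_funUnique (Fin 1) ℝ).symm.integral_comp'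
      (bandCycle f s A B)).symm.trans ?_
    simp [bandCycle, bandKernel_zero, psum, integral_mul_const, Real.fourier_eq]
  | succ m ih =>
    set c := s (Fin.last m)
    have hB'' : MeasurableSet (A ∩ (· + c) ⁻¹' B) := hA.inter (hB.preimage (measurable_add_const c))
    have hint' : Integrable (bandCycle (fun t ↦ f t * 𝐞 (c * t)) (Fin.init s) A
        (A ∩ (· + c) ⁻¹' B)) :=
      (integrable_comp_snoc hint).integral_prod_right.congr
        (.of_forall (integral_bandCycle_snoc f s hA hA' hB hB'))
    rw [integral_eq_integral_integral_snoc hint]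
    simp only [integral_bandCycle_snoc f s hA hA' hB hB']
    rw [ih hB'' (measure_ne_top_of_subset Set.inter_subset_left hA') hint']
    congr 1
    · rw [fourier_mul_fourierChar, Fin.sum_univ_castSucc, neg_add, ← sub_eq_add_neg]
      rfl
    · congr 2 with t
      have hlast : psum s (m + 1) = psum s m + c := by
        rw [← psum_init s le_rfl, psum_eq_sum, psum_eq_sum, Fin.sum_univ_castSucc]
        rfl
      simp only [Set.mem_ofPred_eq, Set.mem_inter_iff, Set.mem_preimage, Nat.lt_succ_iff_lt_or_eq,
        or_imp, forall_and, forall_eq, hlast, psum_init s le_rfl, add_assoc, and_assoc]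
      refine and_congr_left fun _ ↦ forall₂_congr fun j hj ↦ ?_
      rw [psum_init s hj.le]

end CycleIntegral

section FourierExpansion

variable {X ι : Type*} [MeasurableSpace X] {μ : Measure X} [Fintype ι]
  {f : ι → ℝ → ℂ} {y : ι → X → ℝ} {G : X → ℂ}

theorem integrable_prod_fourierChar_mul (hy : ∀ i, Measurable (y i)) (hG : Integrable G μ) :
    Integrable (fun x ↦ (∏ i, (𝐞 (y i x) : ℂ)) * G x) μ := by
  have hmeas : Measurable fun x ↦ ∏ i, (𝐞 (y i x) : ℂ) :=
    univ.measurable_prod fun i _ ↦ continuous_fourierChar_coe.measurable.comp (hy i)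
  refine hG.bdd_mul hmeas.aestronglyMeasurable (c := 1) (.of_forall fun x ↦ ?_)
  rw [norm_prod]
  exact (prod_eq_one fun i _ ↦ Circle.norm_coe _).le

theorem integrable_prod_fourier_mul_fourierChar (hf : ∀ i, Integrable (𝓕 (f i)))
    (hy : ∀ i, Measurable (y i)) (hG : Integrable G μ) :
    Integrable (fun p : X × (ι → ℝ) ↦ (∏ i, 𝓕 (f i) (p.2 i) * 𝐞 (p.2 i * y i p.1)) * G p.1)
      (μ.prod volume) := by
  refine (integrable_prod_fourierChar_mul (y := fun i p ↦ p.2 i * y i p.1) (by fun_prop)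
    (hG.mul_prod (Integrable.fintype_prod hf))).congr (.of_forall fun p ↦ ?_)
  simp only [prod_mul_distrib]
  ring

theorem integral_prod_fourier_mul_fourierChar (hfc : ∀ i, Continuous (f i))
    (hfi : ∀ i, Integrable (f i)) (hf : ∀ i, Integrable (𝓕 (f i))) (t : ι → ℝ) :
    ∫ u : ι → ℝ, ∏ i, 𝓕 (f i) (u i) * 𝐞 (u i * t i) = ∏ i, f i (t i) := by
  rw [integral_fintype_prod_volume_eq_prod fun i u ↦ 𝓕 (f i) u * (𝐞 (u * t i) : ℂ)]
  refine prod_congr rfl fun i _ ↦ ?_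
  rw [← congrFun ((hfc i).fourierInv_fourier_eq (hfi i) (hf i)) (t i), Real.fourierInv_eq]
  simp [Circle.smul_def, mul_comm]

theorem integrable_prod_comp_mul (hfc : ∀ i, Continuous (f i))
    (hfi : ∀ i, Integrable (f i)) (hf : ∀ i, Integrable (𝓕 (f i))) (hy : ∀ i, Measurable (y i))
    (hG : Integrable G μ) : Integrable (fun x ↦ (∏ i, f i (y i x)) * G x) μ := by
  simpa only [integral_mul_const, integral_prod_fourier_mul_fourierChar hfc hfi hf] using
    (integrable_prod_fourier_mul_fourierChar hf hy hG).integral_prod_left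

variable [SFinite μ]

theorem integrable_prod_fourier_mul_integral (hf : ∀ i, Integrable (𝓕 (f i)))
    (hy : ∀ i, Measurable (y i)) (hG : Integrable G μ) :
    Integrable fun u : ι → ℝ ↦
      (∏ i, 𝓕 (f i) (u i)) * ∫ x, (∏ i, (𝐞 (u i * y i x) : ℂ)) * G x ∂μ := by
  simpa only [prod_mul_distrib, mul_assoc, integral_const_mul] using
    (integrable_prod_fourier_mul_fourierChar hf hy hG).integral_prod_right

theorem integral_prod_comp_mul_eq (hfc : ∀ i, Continuous (f i))
    (hfi : ∀ i, Integrable (f i)) (hf : ∀ i, Integrable (𝓕 (f i))) (hy : ∀ i, Measurable (y i))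
    (hG : Integrable G μ) :
    ∫ x, (∏ i, f i (y i x)) * G x ∂μ =
      ∫ u : ι → ℝ, (∏ i, 𝓕 (f i) (u i)) * ∫ x, (∏ i, (𝐞 (u i * y i x) : ℂ)) * G x ∂μ := by
  calc ∫ x, (∏ i, f i (y i x)) * G x ∂μ
      = ∫ x, (∫ u : ι → ℝ, (∏ i, 𝓕 (f i) (u i) * 𝐞 (u i * y i x)) * G x) ∂μ := by
        simp only [integral_mul_const, integral_prod_fourier_mul_fourierChar hfc hfi hf]
    _ = ∫ u : ι → ℝ, ∫ x, (∏ i, 𝓕 (f i) (u i) * 𝐞 (u i * y i x)) * G x ∂μ :=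
        integral_integral_swap (integrable_prod_fourier_mul_fourierChar hf hy hG)
    _ = _ := by simp only [prod_mul_distrib, mul_assoc, integral_const_mul]

end FourierExpansion

section CyclicPhases

variable {ι : Type*} [Fintype ι] {m : ℕ} {A : Set ℝ} {g : ℝ → ℂ} {C : ℝ}

theorem prod_fourierChar_mul_comp (b : ι → Fin (m + 1)) (u : ι → ℝ) (x : Fin (m + 1) → ℝ) :
    ∏ i, (𝐞 (u i * x (b i)) : ℂ) = 𝐞 ((∑ i with b i = 0, u i) * x 0) *
      ∏ j : Fin m, (𝐞 ((∑ i with b i = j.succ, u i) * x j.succ) : ℂ) := by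
  rw [← Fin.prod_univ_succ fun j ↦ (𝐞 ((∑ i with b i = j, u i) * x j) : ℂ), ← prod_fiberwise _ b]
  refine prod_congr rfl fun j _ ↦ ?_
  rw [sum_mul, fourierChar_coe_sum]
  exact prod_congr rfl fun i hi ↦ by rw [(mem_filter.1 hi).2]

theorem psum_fiberwise (b : ι → Fin (m + 1)) (u : ι → ℝ) (j : ℕ) :
    psum (fun k : Fin m ↦ ∑ i with b i = k.succ, u i) j =
      ∑ i with 0 < b i ∧ (b i : ℕ) ≤ j, u i := by
  have hfiber (l : Fin (m + 1)) :
      (∑ i with b i = l, if 0 < b i ∧ (b i : ℕ) ≤ j then u i else 0) =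
        if 0 < l ∧ (l : ℕ) ≤ j then ∑ i with b i = l, u i else 0 := by
    rw [ite_sum_zero]
    exact sum_congr rfl fun i hi ↦ by rw [(mem_filter.1 hi).2]
  rw [sum_filter, ← sum_fiberwise univ b, Fin.sum_univ_succ]
  simp [hfiber, psum]

theorem integral_prod_fourierChar_mul_cyclic_zero (hA : MeasurableSet A) (hA' : volume A ≠ ∞)
    (hAC : ∀ x, ‖bandKernel A x‖ ≤ C * (1 + ‖x‖)⁻¹) (hg : Integrable g)
    (b : ι → Fin (m + 1)) (u : ι → ℝ) :
    ∫ x : Fin (m + 1) → ℝ, (∏ i, (𝐞 (u i * x (b i)) : ℂ)) *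
        (g (x 0) * ∏ j, bandKernel A (x j - x (cpred j))) =
      𝓕 g (-∑ i, u i) *
        volume.real {t | ∀ j ≤ m, t + ∑ i with 0 < b i ∧ (b i : ℕ) ≤ j, u i ∈ A} := by
  set c := ∑ i with b i = 0, u i
  set s : Fin m → ℝ := fun k ↦ ∑ i with b i = k.succ, u i
  have hcycle (x : Fin (m + 1) → ℝ) : (∏ i, (𝐞 (u i * x (b i)) : ℂ)) *
      (g (x 0) * ∏ j, bandKernel A (x j - x (cpred j))) =
        bandCycle (fun t ↦ g t * 𝐞 (c * t)) s A A x := by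
    rw [prod_fourierChar_mul_comp, Fin.prod_univ_succ, bandCycle, prod_mul_distrib, cpred_zero]
    simp only [cpred_succ]
    ring
  have hG := integrable_mul_prod_cyclic_zero (m := m) hg (continuous_bandKernel hA') hAC
  have hint : Integrable (bandCycle (fun t ↦ g t * 𝐞 (c * t)) s A A) :=
    (integrable_prod_fourierChar_mul (by fun_prop) hG).congr (.of_forall hcycle)
  have hsum : c + ∑ k, s k = ∑ i, u i := by
    rw [← sum_fiberwise _ b, Fin.sum_univ_succ]
  simp only [hcycle]
  rw [integral_bandCycle hA hA' hA hA' hint, fourier_mul_fourierChar, ← hsum, neg_add_rev,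
    sub_eq_add_neg]
  simp only [s, psum_fiberwise, Nat.le_iff_lt_or_eq, or_imp, forall_and, forall_eq]

-- Rotating the cycle by `p` keeps the order of the vertices before `p` and moves them to its end.
theorem pos_and_val_sub_le_iff {b p : Fin (m + 1)} (hb : b ≤ p) {j : ℕ} (hj : j ≤ m) :
    0 < b - p ∧ ((b - p : Fin (m + 1)) : ℕ) ≤ j ↔ (b : ℕ) < j + p - m := by
  rcases hb.eq_or_lt with rfl | hlt
  · simp only [sub_self, lt_self_iff_false, Fin.coe_ofNat_eq_mod, Nat.zero_mod, zero_le, and_true,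
      false_iff, not_lt, tsub_le_iff_right]
    omega
  · rw [Fin.pos_iff_ne_zero, sub_ne_zero, Fin.coe_sub_iff_lt.2 hlt]
    have := Fin.lt_def.1 hlt
    exact ⟨fun h ↦ by omega, fun h ↦ ⟨hlt.ne, by omega⟩⟩

theorem integral_prod_fourierChar_mul_cyclic (hA : MeasurableSet A) (hA' : volume A ≠ ∞)
    (hAC : ∀ x, ‖bandKernel A x‖ ≤ C * (1 + ‖x‖)⁻¹) (hg : Integrable g)
    {b : ι → Fin (m + 1)} {p : Fin (m + 1)} (hb : ∀ i, b i ≤ p) (u : ι → ℝ) :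
    ∫ x : Fin (m + 1) → ℝ, (∏ i, (𝐞 (u i * x (b i)) : ℂ)) *
        (g (x p) * ∏ j, bandKernel A (x j - x (cpred j))) =
      𝓕 g (-∑ i, u i) *
        volume.real {t | ∀ q ≤ (p : ℕ), t + ∑ i with (b i : ℕ) < q, u i ∈ A} := by
  have hset (t : ℝ) :
      (∀ j ≤ m, t + ∑ i with 0 < b i - p ∧ ((b i - p : Fin (m + 1)) : ℕ) ≤ j, u i ∈ A) ↔
        ∀ q ≤ (p : ℕ), t + ∑ i with (b i : ℕ) < q, u i ∈ A := by
    have hshift {j : ℕ} (hj : j ≤ m) :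
        ∑ i with 0 < b i - p ∧ ((b i - p : Fin (m + 1)) : ℕ) ≤ j, u i =
          ∑ i with (b i : ℕ) < j + p - m, u i := by
      simp only [pos_and_val_sub_le_iff (hb _) hj]
    refine ⟨fun h q hq ↦ ?_, fun h j hj ↦ ?_⟩
    · have hle : m + q - p ≤ m := by omega
      rw [show q = m + q - p + p - m by omega, ← hshift hle]
      exact h _ hle
    · rw [hshift hj]
      exact h _ (by omega)
  calc _ = ∫ x, (∏ i, (𝐞 (u i * cyclicShift p x (b i - p)) : ℂ)) * (g (cyclicShift p x 0) *
        ∏ j, bandKernel A (cyclicShift p x j - cyclicShift p x (cpred j))) := by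
        congr with x
        rw [prod_cyclicShift]
        simp only [cyclicShift_apply, sub_add_cancel, zero_add]
    _ = ∫ x : Fin (m + 1) → ℝ, (∏ i, (𝐞 (u i * x (b i - p)) : ℂ)) *
        (g (x 0) * ∏ j, bandKernel A (x j - x (cpred j))) :=
        (measurePreserving_cyclicShift p).integral_comp' fun x ↦
          (∏ i, (𝐞 (u i * x (b i - p)) : ℂ)) * (g (x 0) * ∏ j, bandKernel A (x j - x (cpred j)))
    _ = _ := by
        simp only [integral_prod_fourierChar_mul_cyclic_zero hA hA' hAC hg, hset]

end CyclicPhases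

section Compositions

variable {n N : ℕ}

/-- The vertex of the `n`-cycle at which the `i`-th of the `n` factors of `∏ j, h (x j) ^ k_j` is
evaluated: the index of the block of `c` containing `i`, read in `Fin n`. -/
def blockVertex (c : Composition n) (i : Fin n) : Fin n :=
  Fin.castLE c.length_le (c.index i)

theorem prod_pow_blocksFun {M : Type*} [CommMonoid M] (c : Composition n) (a : Fin n → M) :
    ∏ j, a (Fin.castLE c.length_le j) ^ c.blocksFun j = ∏ i, a (blockVertex c i) := by
  rw [← c.prod_prod_apply_embedding]
  simp [blockVertex, c.index_embedding]

theorem val_blockVertex_lt_iff (c : Composition n) (i : Fin n) {q : ℕ} :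
    (blockVertex c i : ℕ) < q ↔ (i : ℕ) < c.sizeUpTo q :=
  ⟨fun h ↦ (c.lt_sizeUpTo_index_succ i).trans_le (c.monotone_sizeUpTo h),
    fun h ↦ c.monotone_sizeUpTo.reflect_lt ((c.sizeUpTo_index_le i).trans_lt h)⟩

theorem blockVertex_le_last (c : Composition (N + 1)) (i : Fin (N + 1)) :
    blockVertex c i ≤ blockVertex c (Fin.last N) :=
  Fin.le_def.2 <| Nat.lt_succ_iff.1 <| (val_blockVertex_lt_iff c i).2 <|
    (Fin.le_def.1 i.le_last).trans_lt (c.lt_sizeUpTo_index_succ _)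

theorem le_val_blockVertex_last_iff (c : Composition (N + 1)) {q : ℕ} :
    q ≤ (blockVertex c (Fin.last N) : ℕ) ↔ q < c.length := by
  refine ⟨fun h ↦ h.trans_lt (c.index _).2, fun h ↦ not_lt.1 fun hlt ↦ ?_⟩
  have hlast : N < c.sizeUpTo q := (val_blockVertex_lt_iff c _).1 hlt
  have hsize := (c.sizeUpTo_strict_mono h).trans_le (c.sizeUpTo_le _)
  omega

theorem psum_neg (v : Fin n → ℝ) (q : ℕ) : psum (-v) q = -psum v q := by
  rw [psum, psum, ← sum_neg_distrib]
  exact sum_congr rfl fun i _ ↦ by rw [apply_ite Neg.neg, neg_zero, Pi.neg_apply]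

theorem half_Psi_le_iff {v : Fin n → ℝ} {c : Composition n} (hc : 0 < c.length) {r : ℝ} :
    Psi v c / 2 ≤ r ↔ ∀ q < c.length, psum v (c.sizeUpTo q) ≤ r := by
  rw [Psi, mul_div_cancel_left₀ _ two_ne_zero, fold_max_le]
  refine ⟨fun h q hq ↦ ?_, fun h ↦ ⟨?_, fun q hq ↦ h q (mem_Ico.1 hq).2⟩⟩
  · rcases q.eq_zero_or_pos with rfl | hpos
    · simpa [psum] using h.1
    · exact h.2 q (mem_Ico.2 ⟨hpos, hq⟩)
  · simpa [psum] using h 0 hc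

theorem volume_real_setOf_add_psum_mem_Icc (v : Fin n → ℝ) {c : Composition n} (hc : 0 < c.length)
    (η : ℝ) :
    volume.real {t | ∀ q < c.length, t + psum v (c.sizeUpTo q) ∈ Set.Icc (-(η / 2)) (η / 2)} =
      max 0 (η - Psi v c / 2 - Psi (-v) c / 2) := by
  have hset : {t | ∀ q < c.length, t + psum v (c.sizeUpTo q) ∈ Set.Icc (-(η / 2)) (η / 2)} =
      Set.Icc (Psi (-v) c / 2 - η / 2) (η / 2 - Psi v c / 2) := by
    ext t
    rw [Set.mem_Icc, sub_le_comm, le_sub_comm, sub_le_iff_le_add, half_Psi_le_iff hc,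
      half_Psi_le_iff hc]
    simp only [Set.mem_ofPred_eq, Set.mem_Icc, psum_neg, forall_and]
    refine and_congr (forall₂_congr fun q _ ↦ ?_) (forall₂_congr fun q _ ↦ ?_) <;>
      constructor <;> intro h <;> linarith
  rw [hset, Real.volume_real_Icc, max_comm]
  ring_nf

theorem psum_Ufull (u : Fin N → ℝ) {q : ℕ} (hq : q ≤ N) : psum (Ufull (N + 1) u) q = psum u q := by
  rw [← psum_init _ hq]
  congr 1
  ext i
  simp [Fin.init, Ufull]

theorem prod_Ufull {M : Type*} [CommMonoid M] (g : ℝ → M) (u : Fin N → ℝ) :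
    ∏ j, g (Ufull (N + 1) u j) = (∏ i, g (u i)) * g (-∑ i, u i) := by
  simp [Fin.prod_univ_castSucc, Ufull]

end Compositions

section CompositionIntegral

variable {N : ℕ} {η : ℝ} {f : ℝ → ℂ}

theorem integrable_mul_prod_Ksin (hη : 0 ≤ η) (hf : Integrable f) (p : Fin (N + 1)) :
    Integrable fun x : Fin (N + 1) → ℝ ↦ f (x p) * ∏ j, (Ksin η (x j) (x (cpred j)) : ℂ) := by
  simpa only [bandKernel_Icc_sub hη] using integrable_mul_prod_cyclic hf
    (continuous_bandKernel measure_Icc_lt_top.ne) (norm_bandKernel_Icc_le hη) p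

theorem integral_prod_fourierChar_mul_prod_Ksin (hη : 0 ≤ η) (hf : Integrable f)
    (c : Composition (N + 1)) (u : Fin N → ℝ) :
    ∫ x : Fin (N + 1) → ℝ, (∏ i, (𝐞 (u i * x (blockVertex c i.castSucc)) : ℂ)) *
        (f (x (blockVertex c (Fin.last N))) * ∏ j, (Ksin η (x j) (x (cpred j)) : ℂ)) =
      𝓕 f (-∑ i, u i) *
        (max 0 (η - Psi (Ufull (N + 1) u) c / 2 - Psi (-Ufull (N + 1) u) c / 2) : ℝ) := by
  have hpsum {q : ℕ} (hq : q < c.length) :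
      ∑ i with (blockVertex c (Fin.castSucc i) : ℕ) < q, u i =
        psum (Ufull (N + 1) u) (c.sizeUpTo q) := by
    have hle : c.sizeUpTo q ≤ N :=
      Nat.lt_succ_iff.1 ((c.sizeUpTo_strict_mono hq).trans_le (c.sizeUpTo_le _))
    rw [psum_Ufull u hle]
    simp only [psum, sum_filter, val_blockVertex_lt_iff, Fin.val_castSucc]
  simp only [← bandKernel_Icc_sub hη]
  rw [integral_prod_fourierChar_mul_cyclic measurableSet_Icc measure_Icc_lt_top.ne
    (norm_bandKernel_Icc_le hη) hf (fun _ ↦ blockVertex_le_last c _),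
    ← volume_real_setOf_add_psum_mem_Icc _ (c.length_pos_iff.2 N.succ_pos)]
  congr 3 with t
  refine forall_congr' fun q ↦ ?_
  rw [le_val_blockVertex_last_iff]
  exact forall_congr' fun hq ↦ by rw [hpsum hq]

theorem prod_blockVertex_eq_mul_last (f : ℝ → ℂ) (c : Composition (N + 1)) (x : Fin (N + 1) → ℝ) :
    ∏ i, f (x (blockVertex c i)) =
      (∏ i : Fin N, f (x (blockVertex c i.castSucc))) * f (x (blockVertex c (Fin.last N))) :=
  Fin.prod_univ_castSucc _

theorem integrable_prod_blockVertex_mul_prod_Ksin (hη : 0 ≤ η) (hfc : Continuous f)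
    (hfi : Integrable f) (hf : Integrable (𝓕 f)) (c : Composition (N + 1)) :
    Integrable fun x : Fin (N + 1) → ℝ ↦
      (∏ i, f (x (blockVertex c i))) * ∏ j, (Ksin η (x j) (x (cpred j)) : ℂ) := by
  simpa only [prod_blockVertex_eq_mul_last, mul_assoc] using
    integrable_prod_comp_mul (f := fun _ : Fin N ↦ f)
      (y := fun i x ↦ x (blockVertex c i.castSucc)) (fun _ ↦ hfc) (fun _ ↦ hfi) (fun _ ↦ hf)
      (fun _ ↦ measurable_pi_apply _) (integrable_mul_prod_Ksin hη hfi (blockVertex c (Fin.last N)))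

theorem integrable_prod_fourier_mul_max_Psi (hη : 0 ≤ η)
    (hfi : Integrable f) (hf : Integrable (𝓕 f)) (c : Composition (N + 1)) :
    Integrable fun u : Fin N → ℝ ↦ (∏ j, 𝓕 f (Ufull (N + 1) u j)) *
      (max 0 (η - Psi (Ufull (N + 1) u) c / 2 - Psi (-Ufull (N + 1) u) c / 2) : ℝ) := by
  simpa only [integral_prod_fourierChar_mul_prod_Ksin hη hfi, prod_Ufull, mul_assoc] using
    integrable_prod_fourier_mul_integral (f := fun _ : Fin N ↦ f)
      (y := fun i x ↦ x (blockVertex c i.castSucc)) (fun _ ↦ hf)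
      (fun _ ↦ measurable_pi_apply _) (integrable_mul_prod_Ksin hη hfi (blockVertex c (Fin.last N)))

theorem integral_prod_blockVertex_mul_prod_Ksin (hη : 0 ≤ η) (hfc : Continuous f)
    (hfi : Integrable f) (hf : Integrable (𝓕 f)) (c : Composition (N + 1)) :
    ∫ x : Fin (N + 1) → ℝ,
        (∏ i, f (x (blockVertex c i))) * ∏ j, (Ksin η (x j) (x (cpred j)) : ℂ) =
      ∫ u : Fin N → ℝ, (∏ j, 𝓕 f (Ufull (N + 1) u j)) *
        (max 0 (η - Psi (Ufull (N + 1) u) c / 2 - Psi (-Ufull (N + 1) u) c / 2) : ℝ) := by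
  simpa only [integral_prod_fourierChar_mul_prod_Ksin hη hfi, prod_Ufull, mul_assoc,
      prod_blockVertex_eq_mul_last] using
    integral_prod_comp_mul_eq (f := fun _ : Fin N ↦ f)
      (y := fun i x ↦ x (blockVertex c i.castSucc)) (fun _ ↦ hfc) (fun _ ↦ hfi) (fun _ ↦ hf)
      (fun _ ↦ measurable_pi_apply _) (integrable_mul_prod_Ksin hη hfi (blockVertex c (Fin.last N)))

end CompositionIntegral

theorem hat_eq_fourier (h : ℝ → ℝ) : hat h = 𝓕 fun t ↦ (h t : ℂ) := by
  ext u
  rw [hat, Real.fourier_eq']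
  congr with x
  rw [smul_eq_mul, mul_comm]
  congr 2
  push_cast [RCLike.inner_apply, conj_trivial]
  ring

theorem ofReal_UpsilonFun {n : ℕ} (Υ : Composition n → ℝ) (h : ℝ → ℝ) (x : Fin n → ℝ) :
    (UpsilonFun Υ h x : ℂ) = ∑ c, (Υ c : ℂ) * ∏ i, (h (x (blockVertex c i)) : ℂ) := by
  simp only [UpsilonFun, prod_pow_blocksFun _ fun j ↦ h (x j), ofReal_sum, ofReal_mul, ofReal_prod]

theorem sine_kernel_cumulant_identity_general {n : ℕ} (hn : 0 < n) {η : ℝ} (hη : 0 ≤ η)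
    {h : ℝ → ℝ} (hc : Continuous h) (hi : Integrable h) (hi' : Integrable (hat h))
    (Υ : Composition n → ℝ) :
    ((∫ x : Fin n → ℝ, UpsilonFun Υ h x * ∏ j, Ksin η (x j) (x (cpred j)) : ℝ) : ℂ) =
      ∫ u : Fin (n - 1) → ℝ, (∏ j, hat h (Ufull n u j)) *
        ((∑ c, Υ c * max 0 (η - Psi (Ufull n u) c / 2 - Psi (-(Ufull n u)) c / 2) : ℝ) : ℂ) := by
  obtain ⟨N, rfl⟩ : ∃ N, n = N + 1 := ⟨n - 1, by omega⟩
  have hfc : Continuous fun t ↦ (h t : ℂ) := continuous_ofReal.comp hc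
  rw [hat_eq_fourier] at hi' ⊢
  calc _ = ∫ x : Fin (N + 1) → ℝ, ∑ c, (Υ c : ℂ) *
        ((∏ i, (h (x (blockVertex c i)) : ℂ)) * ∏ j, (Ksin η (x j) (x (cpred j)) : ℂ)) := by
        rw [← integral_complex_ofReal]
        simp only [ofReal_mul, ofReal_prod, ofReal_UpsilonFun, sum_mul, mul_assoc]
    _ = ∑ c, (Υ c : ℂ) * ∫ u : Fin N → ℝ, (∏ j, 𝓕 (fun t ↦ (h t : ℂ)) (Ufull (N + 1) u j)) *
        (max 0 (η - Psi (Ufull (N + 1) u) c / 2 - Psi (-(Ufull (N + 1) u)) c / 2) : ℝ) := by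
        rw [integral_finsetSum _ fun c _ ↦
          (integrable_prod_blockVertex_mul_prod_Ksin hη hfc hi.ofReal hi' c).const_mul _]
        simp only [integral_const_mul,
          integral_prod_blockVertex_mul_prod_Ksin hη hfc hi.ofReal hi']
    _ = ∫ u : Fin N → ℝ, ∑ c, (Υ c : ℂ) * ((∏ j, 𝓕 (fun t ↦ (h t : ℂ)) (Ufull (N + 1) u j)) *
        (max 0 (η - Psi (Ufull (N + 1) u) c / 2 - Psi (-(Ufull (N + 1) u)) c / 2) : ℝ)) := by
        simp only [← integral_const_mul]
        exact (integral_finsetSum _ fun c _ ↦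
          (integrable_prod_fourier_mul_max_Psi hη hi.ofReal hi' c).const_mul _).symm
    _ = _ := by
        simp only [ofReal_sum, ofReal_mul, mul_sum, mul_left_comm]
        rfl

theorem integrable_hat (h : SchwartzMap ℝ ℝ) : Integrable (hat h) := by
  rw [hat_eq_fourier]
  exact (𝓕 (SchwartzMap.postcompCLM ofRealCLM h)).integrable

/-- for `n ≥ 2`, `η > 0`, `h` Schwartz, and any map `Υ` on compositions of
`n`, with `x₀ = x_n` and `u_n := −(u₁+⋯+u_{n−1})`,
`∫_{ℝⁿ} Υⁿ[h](x) Π_j K^sin_η(x_j, x_{j−1}) dx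
  = ∫_{ℝ^{n−1}} Π_j ĥ(u_j) Σ_{k⊢n} Υ(k) max{0, η − Ψ_u(k)/2 − Ψ_{−u}(k)/2} du`. -/
theorem sine_kernel_cumulant_identity (n : ℕ) (hn : 2 ≤ n) (η : ℝ) (hη : 0 < η)
    (h : SchwartzMap ℝ ℝ) (Υ : Composition n → ℝ) :
    ((∫ x : Fin n → ℝ,
        UpsilonFun Υ (fun t => h t) x * ∏ j : Fin n, Ksin η (x j) (x (cpred j))
        ∂(Measure.pi fun _ : Fin n => volume) : ℝ) : ℂ)
      = ∫ u : Fin (n - 1) → ℝ,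
          (∏ j : Fin n, hat (fun t => h t) (Ufull n u j)) *
            ((∑ c : Composition n, Υ c *
                max 0 (η - Psi (Ufull n u) c / 2 - Psi (-(Ufull n u)) c / 2) : ℝ) : ℂ)
          ∂(Measure.pi fun _ : Fin (n - 1) => volume) :=
  sine_kernel_cumulant_identity_general (by omega) hη.le h.continuous h.integrable
    (integrable_hat h) Υ
end
end
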